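/- arXiv:1302.6322 — 5 statements merged into one kernel-verified Lean document; each statement's English description precedes it below -/
import Mathlib

section
/- Suppose (P) has a KKT point (Assumption 1). Then for every μ > 0 and every y ∈ ℝ^m, g_μ(y) = sup_{z ∈ K*} { g₀(z) − (1/(2μ))‖z − y‖₂² }, and the supremum is attained at a unique point π_μ(y) ∈ K*. -/
open RealInnerProductSpace Metric

/-- The dual cone `K* = {y : ⟪y, s⟫ ≥ 0 for all s ∈ K}`. -/
def dualCone {m : ℕ} (K : Set (EuclideanSpace ℝ (Fin m))) :
    Set (EuclideanSpace ℝ (Fin m)) :=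
  {y | ∀ s ∈ K, 0 ≤ ⟪y, s⟫}

/-- The penalty Lagrangian
`L_μ(x, y) = p(x) + (μ/2)·d_K(Ax - b - y/μ)² - ‖y‖²/(2μ)`. -/
noncomputable def Lpen {n m : ℕ}
    (A : EuclideanSpace ℝ (Fin n) →L[ℝ] EuclideanSpace ℝ (Fin m))
    (b : EuclideanSpace ℝ (Fin m)) (K : Set (EuclideanSpace ℝ (Fin m)))
    (p : EuclideanSpace ℝ (Fin n) → ℝ) (μ : ℝ)
    (x : EuclideanSpace ℝ (Fin n)) (y : EuclideanSpace ℝ (Fin m)) : ℝ :=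
  p x + μ / 2 * (infDist (A x - b - μ⁻¹ • y) K) ^ 2 - ‖y‖ ^ 2 / (2 * μ)

/-- `g_μ(y) = inf_{x ∈ χ} L_μ(x, y)`. -/
noncomputable def gmu {n m : ℕ}
    (A : EuclideanSpace ℝ (Fin n) →L[ℝ] EuclideanSpace ℝ (Fin m))
    (b : EuclideanSpace ℝ (Fin m)) (K : Set (EuclideanSpace ℝ (Fin m)))
    (χ : Set (EuclideanSpace ℝ (Fin n)))
    (p : EuclideanSpace ℝ (Fin n) → ℝ) (μ : ℝ) (y : EuclideanSpace ℝ (Fin m)) : ℝ :=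
  sInf ((fun x => Lpen A b K p μ x y) '' χ)

/-- The Lagrangian dual function `g₀(z) = inf_{x ∈ χ} { p(x) - ⟪z, Ax - b⟫ }`. -/
noncomputable def gzero {n m : ℕ}
    (A : EuclideanSpace ℝ (Fin n) →L[ℝ] EuclideanSpace ℝ (Fin m))
    (b : EuclideanSpace ℝ (Fin m)) (χ : Set (EuclideanSpace ℝ (Fin n)))
    (p : EuclideanSpace ℝ (Fin n) → ℝ) (z : EuclideanSpace ℝ (Fin m)) : ℝ :=
  sInf ((fun x => p x - ⟪z, A x - b⟫) '' χ)

/-- The optimal value `p* = inf { p(x) : x ∈ χ, Ax - b ∈ K }` of the conic program (P). -/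
noncomputable def pstar {n m : ℕ}
    (A : EuclideanSpace ℝ (Fin n) →L[ℝ] EuclideanSpace ℝ (Fin m))
    (b : EuclideanSpace ℝ (Fin m)) (K : Set (EuclideanSpace ℝ (Fin m)))
    (χ : Set (EuclideanSpace ℝ (Fin n)))
    (p : EuclideanSpace ℝ (Fin n) → ℝ) : ℝ :=
  sInf (p '' {x ∈ χ | A x - b ∈ K})

/-!
Write the squared distance in `L_μ` as a minimum over a slack `s ∈ K` (replacing `K` by its closure
if necessary). Then `g_μ(y) + ‖y‖² / (2μ)` is the minimum over the convex set `χ ×ˢ K` of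
`p(x) + (μ/2) ‖Ax - b - y/μ - s‖²`, attained at some `(x₀, s₀)`. Put `z = y - μ (Ax₀ - b - s₀)`.
The first-order condition at `(x₀, s₀)` decouples: in the `x` direction it says that `x₀` attains
the infimum defining `g₀(z)`, in the `s` direction that `z ∈ K*` and `⟪z, s₀⟫ = 0`.
Completing the square in `w` gives
`p(x₀) - ⟪w, Ax₀ - b⟫ - ‖w - y‖² / (2μ) = g_μ(y) - ⟪w, s₀⟫ - ‖w - z‖² / (2μ)`,
so for `w ∈ K*` the dual objective is at most `g_μ(y) - ‖w - z‖² / (2μ)`, with equality at `w = z`.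
-/

open Filter Topology

section Convexity

variable {E F : Type*} [AddCommGroup E] [Module ℝ E] [NormedAddCommGroup F] [InnerProductSpace ℝ F]

theorem nonneg_of_forall_nonneg_add_mul {a c : ℝ}
    (h : ∀ t : ℝ, 0 < t → t ≤ 1 → 0 ≤ a + t * c) : 0 ≤ a := by
  have hlim : Tendsto (fun t : ℝ => a + t * c) (𝓝[>] 0) (𝓝 a) := by
    have hcont : Continuous fun t : ℝ => a + t * c := by fun_prop
    simpa using (hcont.tendsto 0).mono_left nhdsWithin_le_nhds
  refine ge_of_tendsto hlim ?_
  filter_upwards [Ioc_mem_nhdsGT one_pos] with t ht using h t ht.1 ht.2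

theorem isMinOn_add_inner_of_isMinOn_add_norm_sq {S : Set E} {f : E → ℝ} (hf : ConvexOn ℝ S f)
    (B : E →ₗ[ℝ] F) (e : F) (c : ℝ) {x₀ : E} (hx₀ : x₀ ∈ S)
    (hmin : IsMinOn (fun x => f x + c / 2 * ‖B x - e‖ ^ 2) S x₀) :
    IsMinOn (fun x => f x + c * ⟪B x₀ - e, B x⟫) S x₀ := by
  refine isMinOn_iff.2 fun x hx => ?_
  have hdir : 0 ≤ f x - f x₀ + c * ⟪B x₀ - e, B x - B x₀⟫ := by
    refine nonneg_of_forall_nonneg_add_mul (c := c / 2 * ‖B x - B x₀‖ ^ 2) fun t ht ht1 => ?_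
    have ht1' : 0 ≤ 1 - t := by linarith
    have hsum : 1 - t + t = 1 := by ring
    have hle := isMinOn_iff.1 hmin _ (hf.1 hx₀ hx ht1' ht.le hsum)
    have hconv := hf.2 hx₀ hx ht1' ht.le hsum
    have hsplit : B ((1 - t) • x₀ + t • x) - e = (B x₀ - e) + t • (B x - B x₀) := by
      simp only [map_add, map_smul]
      module
    have hnorm : ‖B ((1 - t) • x₀ + t • x) - e‖ ^ 2 =
        ‖B x₀ - e‖ ^ 2 + 2 * (t * ⟪B x₀ - e, B x - B x₀⟫) + t ^ 2 * ‖B x - B x₀‖ ^ 2 := by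
      rw [hsplit, norm_add_sq_real, inner_smul_right, norm_smul, mul_pow, Real.norm_eq_abs, sq_abs]
    rw [hnorm] at hle
    simp only [smul_eq_mul] at hconv
    refine nonneg_of_mul_nonneg_right (a := t) ?_ ht
    linarith
  rw [inner_sub_right] at hdir
  linarith

variable [CompleteSpace F]

theorem exists_mem_infDist_eq_norm_sub {K : Set F} (hne : K.Nonempty) (hcl : IsClosed K)
    (hcv : Convex ℝ K) (v : F) : ∃ s ∈ K, infDist v K = ‖v - s‖ := by
  obtain ⟨s, hs, hnorm⟩ := exists_norm_eq_iInf_of_complete_convex hne hcl.isComplete hcv v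
  exact ⟨s, hs, by simp only [infDist_eq_iInf, dist_eq_norm, hnorm]⟩

theorem mem_innerDual_and_inner_eq_zero_of_isMinOn {K : Set F}
    (hcone : ∀ c : ℝ, 0 ≤ c → ∀ s ∈ K, c • s ∈ K) {z s₀ : F} (hs₀ : s₀ ∈ K)
    (hmin : IsMinOn (fun s => ⟪z, s⟫) K s₀) :
    z ∈ ProperCone.innerDual K ∧ ⟪z, s₀⟫ = 0 := by
  have hscale (c : ℝ) (hc : 0 ≤ c) : ⟪z, s₀⟫ ≤ c * ⟪z, s₀⟫ := by
    simpa only [inner_smul_right] using isMinOn_iff.1 hmin _ (hcone c hc s₀ hs₀)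
  have hzero : ⟪z, s₀⟫ = 0 := by linarith [hscale 0 le_rfl, hscale 2 zero_le_two]
  refine ⟨ProperCone.mem_innerDual.2 fun s hs => ?_, hzero⟩
  simpa only [hzero, real_inner_comm] using isMinOn_iff.1 hmin s hs

theorem innerDual_closure (K : Set F) :
    ProperCone.innerDual (closure K) = ProperCone.innerDual K := by
  refine le_antisymm (ProperCone.innerDual_le_innerDual subset_closure) fun z hz => ?_
  have hclosed : IsClosed {s : F | 0 ≤ ⟪s, z⟫} :=
    isClosed_le continuous_const (continuous_id.inner continuous_const)
  exact fun s hs => closure_minimal hz hclosed hs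

end Convexity

section Duality

variable {E F : Type*} [AddCommGroup E] [Module ℝ E] [TopologicalSpace E]
  [NormedAddCommGroup F] [InnerProductSpace ℝ F]

/-- The Lagrangian dual function `g₀`: `gzero` with `ℝⁿ` replaced by a real vector space with a
topology and `ℝᵐ` by a real inner product space. -/
noncomputable def dualFunction (A : E →L[ℝ] F) (b : F) (χ : Set E) (p : E → ℝ) (z : F) : ℝ :=
  sInf ((fun x => p x - ⟪z, A x - b⟫) '' χ)

/-- The penalty Lagrangian `L_μ`: `Lpen` over the same spaces as `dualFunction`. -/
noncomputable def penaltyLagrangian (A : E →L[ℝ] F) (b : F) (K : Set F) (p : E → ℝ) (μ : ℝ)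
    (x : E) (y : F) : ℝ :=
  p x + μ / 2 * (infDist (A x - b - μ⁻¹ • y) K) ^ 2 - ‖y‖ ^ 2 / (2 * μ)

/-- The penalty dual function `g_μ`: `gmu` over the same spaces as `dualFunction`. -/
noncomputable def penaltyDualFunction (A : E →L[ℝ] F) (b : F) (K : Set F) (χ : Set E)
    (p : E → ℝ) (μ : ℝ) (y : F) : ℝ :=
  sInf ((fun x => penaltyLagrangian A b K p μ x y) '' χ)

/-- The objective `p(x) + (μ/2) ‖Ax - b - y/μ - s‖²` at the pair `q = (x, s)` of a primal point and
a slack. Minimizing over `s ∈ K` turns it into `L_μ(x, y) + ‖y‖² / (2μ)`. -/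
noncomputable def slackObjective (A : E →L[ℝ] F) (b : F) (p : E → ℝ) (μ : ℝ) (y : F)
    (q : E × F) : ℝ :=
  p q.1 + μ / 2 * ‖A q.1 - b - μ⁻¹ • y - q.2‖ ^ 2

/-- The updated multiplier `y - μ (Ax - b - s)` of the augmented Lagrangian method at the pair
`q = (x, s)`; at a minimizer of `slackObjective` it is the dual solution `π_μ(y)`. -/
def multiplier (A : E →L[ℝ] F) (b : F) (μ : ℝ) (y : F) (q : E × F) : F :=
  y - μ • (A q.1 - b - q.2)

variable {A : E →L[ℝ] F} {b : F} {K : Set F} {χ : Set E} {p : E → ℝ} {μ : ℝ} {y : F} {q₀ : E × F}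

theorem lagrangian_sub_norm_sq_eq_slackObjective (hμ : μ ≠ 0) (w : F) (q : E × F) :
    p q.1 - ⟪w, A q.1 - b⟫ - ‖w - y‖ ^ 2 / (2 * μ) =
      slackObjective A b p μ y q - ‖y‖ ^ 2 / (2 * μ) - ⟪w, q.2⟫ -
        ‖w - multiplier A b μ y q‖ ^ 2 / (2 * μ) := by
  obtain ⟨r, hr⟩ : ∃ r, A q.1 - b = r + q.2 := ⟨A q.1 - b - q.2, by abel⟩
  have hresidual : r + q.2 - μ⁻¹ • y - q.2 = r - μ⁻¹ • y := by abel
  have hmultiplier : w - (y - μ • (r + q.2 - q.2)) = (w - y) + μ • r := by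
    rw [add_sub_cancel_right]
    abel
  rw [slackObjective, multiplier, hr, hresidual, hmultiplier, norm_add_sq_real,
    norm_sub_sq_real r, norm_smul, norm_smul, mul_pow, mul_pow, inner_smul_right, inner_smul_right,
    inner_add_right, inner_sub_left, Real.norm_eq_abs, Real.norm_eq_abs, sq_abs, sq_abs,
    real_inner_comm r y]
  field_simp
  ring

theorem isMinOn_sub_inner_multiplier (hK : Convex ℝ K) (hp : ConvexOn ℝ χ p) (hμ : μ ≠ 0)
    (hq₀ : q₀ ∈ χ ×ˢ K) (hmin : IsMinOn (slackObjective A b p μ y) (χ ×ˢ K) q₀) :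
    IsMinOn (fun q => p q.1 - ⟪multiplier A b μ y q₀, A q.1 - q.2⟫) (χ ×ˢ K) q₀ := by
  let B : E × F →ₗ[ℝ] F := A.toLinearMap ∘ₗ LinearMap.fst ℝ E F - LinearMap.snd ℝ E F
  have hpfst : ConvexOn ℝ (χ ×ˢ K) (fun q : E × F => p q.1) :=
    (hp.comp_linearMap (LinearMap.fst ℝ E F)).subset (fun q hq => hq.1) (hp.1.prod hK)
  have hslack : slackObjective A b p μ y =
      fun q : E × F => p q.1 + μ / 2 * ‖B q - (b + μ⁻¹ • y)‖ ^ 2 := by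
    funext q
    have hres : A q.1 - b - μ⁻¹ • y - q.2 = A q.1 - q.2 - (b + μ⁻¹ • y) := by abel
    exact congrArg (fun v => p q.1 + μ / 2 * ‖v‖ ^ 2) hres
  have hmult : multiplier A b μ y q₀ = -(μ • (B q₀ - (b + μ⁻¹ • y))) := by
    change y - μ • (A q₀.1 - b - q₀.2) = -(μ • (A q₀.1 - q₀.2 - (b + μ⁻¹ • y)))
    rw [← sub_sub, smul_sub _ _ (μ⁻¹ • y), smul_inv_smul₀ hμ]
    module
  rw [hslack] at hmin
  have hfirst := isMinOn_add_inner_of_isMinOn_add_norm_sq hpfst B _ μ hq₀ hmin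
  simp only [hmult, inner_neg_left, real_inner_smul_left, sub_neg_eq_add]
  exact hfirst

theorem dualFunction_multiplier (hK : Convex ℝ K) (hp : ConvexOn ℝ χ p) (hμ : μ ≠ 0)
    (hq₀ : q₀ ∈ χ ×ˢ K) (hmin : IsMinOn (slackObjective A b p μ y) (χ ×ˢ K) q₀) :
    dualFunction A b χ p (multiplier A b μ y q₀) =
      p q₀.1 - ⟪multiplier A b μ y q₀, A q₀.1 - b⟫ := by
  refine IsLeast.csInf_eq ⟨⟨q₀.1, hq₀.1, rfl⟩, ?_⟩
  rintro _ ⟨x, hx, rfl⟩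
  have hle := isMinOn_iff.1 (isMinOn_sub_inner_multiplier hK hp hμ hq₀ hmin) (x, q₀.2)
    ⟨hx, hq₀.2⟩
  simp only [inner_sub_right] at hle ⊢
  linarith

theorem dualFunction_le (hχ : IsCompact χ) (hp : LowerSemicontinuousOn p χ) {x : E} (hx : x ∈ χ)
    (w : F) : dualFunction A b χ p w ≤ p x - ⟪w, A x - b⟫ := by
  have hcont : Continuous fun x => -⟪w, A x - b⟫ := by fun_prop
  have hlsc : LowerSemicontinuousOn (fun x => p x - ⟪w, A x - b⟫) χ := by
    simpa only [sub_eq_add_neg] using hp.add (hcont.lowerSemicontinuous.lowerSemicontinuousOn χ)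
  exact csInf_le (hlsc.bddBelow_of_isCompact hχ) ⟨x, hx, rfl⟩

theorem exists_isMinOn_penaltyLagrangian (hχne : χ.Nonempty) (hχ : IsCompact χ)
    (hp : LowerSemicontinuousOn p χ) (K : Set F) (μ : ℝ) (y : F) :
    ∃ x ∈ χ, IsMinOn (fun x => penaltyLagrangian A b K p μ x y) χ x := by
  have hcont : Continuous fun x =>
      μ / 2 * (infDist (A x - b - μ⁻¹ • y) K) ^ 2 - ‖y‖ ^ 2 / (2 * μ) := by
    have hdist : Continuous fun x => infDist (A x - b - μ⁻¹ • y) K :=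
      (continuous_infDist_pt K).comp (by fun_prop)
    exact (continuous_const.mul (hdist.pow 2)).sub continuous_const
  refine LowerSemicontinuousOn.exists_isMinOn hχne hχ ?_
  simpa only [penaltyLagrangian, add_sub_assoc] using
    hp.add (hcont.lowerSemicontinuous.lowerSemicontinuousOn χ)

theorem penaltyLagrangian_le_slackObjective (hμ : 0 ≤ μ) {q : E × F} (hq : q.2 ∈ K) :
    penaltyLagrangian A b K p μ q.1 y ≤ slackObjective A b p μ y q - ‖y‖ ^ 2 / (2 * μ) := by
  have hdist : infDist (A q.1 - b - μ⁻¹ • y) K ≤ ‖A q.1 - b - μ⁻¹ • y - q.2‖ := by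
    simpa only [dist_eq_norm] using infDist_le_dist_of_mem hq
  unfold penaltyLagrangian slackObjective
  gcongr
  exact infDist_nonneg

variable [CompleteSpace F]

theorem multiplier_mem_innerDual_and_inner_eq_zero (hK : Convex ℝ K)
    (hcone : ∀ c : ℝ, 0 ≤ c → ∀ s ∈ K, c • s ∈ K) (hp : ConvexOn ℝ χ p) (hμ : μ ≠ 0)
    (hq₀ : q₀ ∈ χ ×ˢ K) (hmin : IsMinOn (slackObjective A b p μ y) (χ ×ˢ K) q₀) :
    multiplier A b μ y q₀ ∈ ProperCone.innerDual K ∧ ⟪multiplier A b μ y q₀, q₀.2⟫ = 0 := by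
  refine mem_innerDual_and_inner_eq_zero_of_isMinOn hcone hq₀.2 (isMinOn_iff.2 fun s hs => ?_)
  have hle := isMinOn_iff.1 (isMinOn_sub_inner_multiplier hK hp hμ hq₀ hmin) (q₀.1, s)
    ⟨hq₀.1, hs⟩
  simp only [inner_sub_right] at hle
  linarith

theorem exists_isMinOn_slackObjective (hKne : K.Nonempty) (hKcl : IsClosed K) (hKcv : Convex ℝ K)
    (hχne : χ.Nonempty) (hχ : IsCompact χ) (hp : LowerSemicontinuousOn p χ) (hμ : 0 ≤ μ) (y : F) :
    ∃ q ∈ χ ×ˢ K, IsMinOn (slackObjective A b p μ y) (χ ×ˢ K) q ∧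
      penaltyDualFunction A b K χ p μ y = slackObjective A b p μ y q - ‖y‖ ^ 2 / (2 * μ) := by
  obtain ⟨x₀, hx₀, hmin⟩ := exists_isMinOn_penaltyLagrangian (A := A) (b := b) hχne hχ hp K μ y
  obtain ⟨s₀, hs₀, hdist⟩ :=
    exists_mem_infDist_eq_norm_sub hKne hKcl hKcv (A x₀ - b - μ⁻¹ • y)
  have hattained : penaltyLagrangian A b K p μ x₀ y =
      slackObjective A b p μ y (x₀, s₀) - ‖y‖ ^ 2 / (2 * μ) := by
    rw [penaltyLagrangian, slackObjective, hdist]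
  refine ⟨(x₀, s₀), ⟨hx₀, hs₀⟩, isMinOn_iff.2 fun q hq => ?_, ?_⟩
  · refine (sub_le_sub_iff_right (‖y‖ ^ 2 / (2 * μ))).1 ?_
    calc slackObjective A b p μ y (x₀, s₀) - ‖y‖ ^ 2 / (2 * μ)
        = penaltyLagrangian A b K p μ x₀ y := hattained.symm
      _ ≤ penaltyLagrangian A b K p μ q.1 y := isMinOn_iff.1 hmin q.1 hq.1
      _ ≤ slackObjective A b p μ y q - ‖y‖ ^ 2 / (2 * μ) :=
        penaltyLagrangian_le_slackObjective hμ hq.2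
  · rw [← hattained]
    exact IsLeast.csInf_eq ⟨⟨x₀, hx₀, rfl⟩, Set.forall_mem_image.2 (isMinOn_iff.1 hmin)⟩

theorem exists_dual_maximizer_with_quadratic_growth (hKne : K.Nonempty) (hKcl : IsClosed K)
    (hKcv : Convex ℝ K) (hKcone : ∀ c : ℝ, 0 ≤ c → ∀ s ∈ K, c • s ∈ K) (hχne : χ.Nonempty)
    (hχcp : IsCompact χ) (hp : ConvexOn ℝ χ p) (hplsc : LowerSemicontinuousOn p χ) (hμ : 0 < μ)
    (y : F) :
    ∃ z ∈ ProperCone.innerDual K,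
      penaltyDualFunction A b K χ p μ y = dualFunction A b χ p z - ‖z - y‖ ^ 2 / (2 * μ) ∧
      ∀ w ∈ ProperCone.innerDual K, dualFunction A b χ p w - ‖w - y‖ ^ 2 / (2 * μ) ≤
        penaltyDualFunction A b K χ p μ y - ‖w - z‖ ^ 2 / (2 * μ) := by
  obtain ⟨q, hq, hmin, hval⟩ := exists_isMinOn_slackObjective (A := A) (b := b)
    hKne hKcl hKcv hχne hχcp hplsc hμ.le y
  obtain ⟨hdual, hcompl⟩ :=
    multiplier_mem_innerDual_and_inner_eq_zero hKcv hKcone hp hμ.ne' hq hmin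
  have hsquare (w : F) := lagrangian_sub_norm_sq_eq_slackObjective (A := A) (b := b) (p := p)
    (y := y) hμ.ne' w q
  refine ⟨multiplier A b μ y q, hdual, ?_, fun w hw => ?_⟩
  · rw [dualFunction_multiplier hKcv hp hμ.ne' hq hmin, hsquare, hcompl, hval]
    simp
  · have hslack : 0 ≤ ⟪w, q.2⟫ := real_inner_comm w q.2 ▸ hw hq.2
    linarith [hsquare w, dualFunction_le (A := A) (b := b) hχcp hplsc hq.1 w]

theorem stmt_7_general (hKne : K.Nonempty) (hKcv : Convex ℝ K)
    (hKcone : ∀ c : ℝ, 0 ≤ c → ∀ s ∈ K, c • s ∈ K) (hχne : χ.Nonempty) (hχcp : IsCompact χ)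
    (hp : ConvexOn ℝ χ p) (hplsc : LowerSemicontinuousOn p χ) (hμ : 0 < μ) (y : F) :
    ∃! z : F, z ∈ ProperCone.innerDual K ∧
      (∀ w ∈ ProperCone.innerDual K, dualFunction A b χ p w - ‖w - y‖ ^ 2 / (2 * μ) ≤
        dualFunction A b χ p z - ‖z - y‖ ^ 2 / (2 * μ)) ∧
      penaltyDualFunction A b K χ p μ y = dualFunction A b χ p z - ‖z - y‖ ^ 2 / (2 * μ) := by
  have hcone_closure (c : ℝ) (hc : 0 ≤ c) (s : F) (hs : s ∈ closure K) : c • s ∈ closure K :=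
    map_mem_closure (continuous_const_smul c) hs (hKcone c hc)
  obtain ⟨z, hz, hval, hgrowth⟩ := exists_dual_maximizer_with_quadratic_growth (A := A) (b := b)
    hKne.closure isClosed_closure hKcv.closure hcone_closure hχne hχcp hp hplsc hμ y
  simp only [innerDual_closure, penaltyDualFunction, penaltyLagrangian, infDist_closure]
    at hz hval hgrowth ⊢
  refine ⟨z, ⟨hz, fun w hw => ?_, hval⟩, ?_⟩
  · have hnonneg : 0 ≤ ‖w - z‖ ^ 2 / (2 * μ) := by positivity
    linarith [hgrowth w hw]
  · rintro w ⟨hw, -, hwval⟩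
    have hnonpos : ‖w - z‖ ^ 2 / (2 * μ) ≤ 0 := by linarith [hgrowth w hw]
    have hsq : ‖w - z‖ ^ 2 ≤ 0 := by simpa using (div_le_iff₀ (by positivity)).1 hnonpos
    simpa [sub_eq_zero] using le_antisymm hsq (sq_nonneg _)

end Duality

theorem mem_dualCone_iff_mem_innerDual {m : ℕ} {K : Set (EuclideanSpace ℝ (Fin m))}
    {y : EuclideanSpace ℝ (Fin m)} : y ∈ dualCone K ↔ y ∈ ProperCone.innerDual K :=
  forall₂_congr fun s _ => by rw [innerₗ_apply_apply, real_inner_comm]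

/-- under Assumption 1 (existence of a KKT point), for every `μ > 0` and
every `y`, `g_μ(y) = sup_{z ∈ K*} { g₀(z) - (1/(2μ))‖z - y‖² }`, the supremum being
attained at a unique point `π_μ(y) ∈ K*`. -/
theorem stmt_7 {n m : ℕ} (K : Set (EuclideanSpace ℝ (Fin m)))
    (hKne : K.Nonempty) (hKcl : IsClosed K) (hKcv : Convex ℝ K)
    (hKcone : ∀ (c : ℝ), 0 ≤ c → ∀ x ∈ K, c • x ∈ K)
    (A : EuclideanSpace ℝ (Fin n) →L[ℝ] EuclideanSpace ℝ (Fin m))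
    (b : EuclideanSpace ℝ (Fin m))
    (χ : Set (EuclideanSpace ℝ (Fin n)))
    (hχne : χ.Nonempty) (hχcp : IsCompact χ) (hχcv : Convex ℝ χ)
    (p : EuclideanSpace ℝ (Fin n) → ℝ) (hp : ConvexOn ℝ Set.univ p)
    (hfeas : {x ∈ χ | A x - b ∈ K}.Nonempty)
    (hKKT : ∃ ystar ∈ dualCone K, gzero A b χ p ystar = pstar A b K χ p)
    (μ : ℝ) (hμ : 0 < μ) :
    ∀ y : EuclideanSpace ℝ (Fin m), ∃! z : EuclideanSpace ℝ (Fin m),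
      z ∈ dualCone K ∧
      (∀ w ∈ dualCone K,
        gzero A b χ p w - ‖w - y‖ ^ 2 / (2 * μ) ≤ gzero A b χ p z - ‖z - y‖ ^ 2 / (2 * μ)) ∧
      gmu A b K χ p μ y = gzero A b χ p z - ‖z - y‖ ^ 2 / (2 * μ) := by
  intro y
  simp only [mem_dualCone_iff_mem_innerDual]
  exact stmt_7_general hKne hKcv hKcone hχne hχcp (hp.subset (Set.subset_univ χ) hχcv)
    ((hp.continuousOn isOpen_univ).mono (Set.subset_univ χ)).lowerSemicontinuousOn hμ y
end

section
/- Fix μ > 0, ȳ ∈ ℝ^m, α ≥ 0 and η ≥ 0, and let χ*_μ = argmin_{x ∈ χ} L_μ(x, ȳ), which is nonempty by compactness of χ. Suppose x̄ ∈ χ satisfies at least one of: (a) L_μ(x̄, ȳ) ≤ g_μ(ȳ) + α; or (b) there exists q ∈ ℝⁿ with ‖q‖₂ ≤ η/μ such that (1/μ)·L_μ(x, ȳ) ≥ (1/μ)·L_μ(x̄, ȳ) + ⟨q, x − x̄⟩ for all x ∈ χ. Then 0 ≤ L_μ(x̄, ȳ) − g_μ(ȳ) ≤ max{ α, η · d_{χ*_μ}(x̄)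 }, where d_{χ*_μ}(x̄) = inf_{x ∈ χ*_μ} ‖x − x̄‖₂. -/
open RealInnerProductSpace Metric

/-- The set of minimizers of `f` over `S`. It is spelled with explicit inequalities rather than
`IsMinOn`, so that the set `χ*_μ` is an instance of it by definition. -/
def argminOn {X β : Type*} [LE β] (f : X → β) (S : Set X) : Set X :=
  {z ∈ S | ∀ x ∈ S, f z ≤ f x}

theorem argminOn_nonempty_of_isCompact {X β : Type*} [TopologicalSpace X] [LinearOrder β]
    {f : X → β} {S : Set X} (hS : IsCompact S) (hne : S.Nonempty)
    (hf : LowerSemicontinuousOn f S) : (argminOn f S).Nonempty := by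
  obtain ⟨z, hz, hmin⟩ := hf.exists_isMinOn hne hS
  exact ⟨z, hz, isMinOn_iff.mp hmin⟩

theorem sInf_image_eq_of_mem_argminOn {X β : Type*} [ConditionallyCompleteLattice β]
    {f : X → β} {S : Set X} {z : X} (hz : z ∈ argminOn f S) : sInf (f '' S) = f z :=
  IsLeast.csInf_eq ⟨Set.mem_image_of_mem f hz.1, Set.forall_mem_image.mpr hz.2⟩

theorem le_mul_infDist {X : Type*} [PseudoMetricSpace X] {S : Set X} (hS : S.Nonempty)
    {a c : ℝ} (hc : 0 ≤ c) {x : X} (h : ∀ z ∈ S, a ≤ c * dist x z) : a ≤ c * infDist x S := by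
  have : Nonempty S := hS.to_subtype
  rw [infDist_eq_iInf, Real.mul_iInf_of_nonneg hc]
  exact le_ciInf fun z => h z z.2

section SeminormedSpace

variable {E : Type*} [SeminormedAddCommGroup E] [NormedSpace ℝ E]

theorem sub_le_mul_dist_of_add_dual_le {f : E → ℝ} {φ : StrongDual ℝ E} {c : ℝ} (hφ : ‖φ‖ ≤ c)
    {x z : E} (h : f x + φ (z - x) ≤ f z) : f x - f z ≤ c * dist x z :=
  calc f x - f z ≤ φ (x - z) := by rw [← neg_sub z x, map_neg]; linarith
    _ ≤ ‖φ (x - z)‖ := Real.le_norm_self _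
    _ ≤ c * dist x z := by rw [dist_eq_norm]; exact φ.le_of_opNorm_le hφ _

theorem sub_sInf_image_le_mul_infDist_argminOn {f : E → ℝ} {S : Set E}
    (hne : (argminOn f S).Nonempty) {φ : StrongDual ℝ E} {c : ℝ} (hφ : ‖φ‖ ≤ c) {x : E}
    (h : ∀ z ∈ argminOn f S, f x + φ (z - x) ≤ f z) :
    f x - sInf (f '' S) ≤ c * infDist x (argminOn f S) := by
  refine le_mul_infDist hne ((norm_nonneg φ).trans hφ) fun z hz => ?_
  rw [sInf_image_eq_of_mem_argminOn hz]
  exact sub_le_mul_dist_of_add_dual_le hφ (h z hz)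

theorem stmt_11_general {f : E → ℝ} {S : Set E} (hne : (argminOn f S).Nonempty)
    {μ : ℝ} (hμ : 0 < μ) {α η : ℝ} {x₀ : E} (hx₀ : x₀ ∈ S)
    (hcase : f x₀ ≤ sInf (f '' S) + α ∨
      ∃ φ : StrongDual ℝ E, ‖φ‖ ≤ η / μ ∧
        ∀ x ∈ S, (1 / μ) * f x₀ + φ (x - x₀) ≤ (1 / μ) * f x) :
    0 ≤ f x₀ - sInf (f '' S) ∧
      f x₀ - sInf (f '' S) ≤ max α (η * infDist x₀ (argminOn f S)) := by
  constructor
  · obtain ⟨z, hz⟩ := hne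
    rw [sInf_image_eq_of_mem_argminOn hz]
    exact sub_nonneg.mpr (hz.2 x₀ hx₀)
  · rcases hcase with hgap | ⟨φ, hφ, hsub⟩
    · exact le_max_of_le_left (sub_le_iff_le_add'.mpr hgap)
    · have hnorm : ‖μ • φ‖ ≤ η := by
        rwa [norm_smul, Real.norm_of_nonneg hμ.le, ← le_div_iff₀' hμ]
      have hsub' : ∀ x ∈ S, f x₀ + (μ • φ) (x - x₀) ≤ f x := fun x hx => by
        have := mul_le_mul_of_nonneg_left (hsub x hx) hμ.le
        rwa [mul_add, one_div, mul_inv_cancel_left₀ hμ.ne', mul_inv_cancel_left₀ hμ.ne'] at this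
      exact le_max_of_le_right <|
        sub_sInf_image_le_mul_infDist_argminOn hne hnorm fun z hz => hsub' z hz.1

end SeminormedSpace

theorem continuous_Lpen {n m : ℕ}
    (A : EuclideanSpace ℝ (Fin n) →L[ℝ] EuclideanSpace ℝ (Fin m))
    (b : EuclideanSpace ℝ (Fin m)) (K : Set (EuclideanSpace ℝ (Fin m)))
    {p : EuclideanSpace ℝ (Fin n) → ℝ} (hp : Continuous p) (μ : ℝ)
    (y : EuclideanSpace ℝ (Fin m)) : Continuous fun x => Lpen A b K p μ x y := by
  have hdist : Continuous fun x => infDist (A x - b - μ⁻¹ • y) K :=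
    (continuous_infDist_pt K).comp (by fun_prop)
  exact (hp.add (continuous_const.mul (hdist.pow 2))).sub continuous_const

/-- fix `μ > 0`, `ȳ`, `α ≥ 0`, `η ≥ 0`, and let
`χ*_μ = argmin_{x ∈ χ} L_μ(x, ȳ)`. If `x̄ ∈ χ` satisfies either
(a) `L_μ(x̄, ȳ) ≤ g_μ(ȳ) + α`, or (b) there is `q` with `‖q‖ ≤ η/μ` such that
`(1/μ)L_μ(x, ȳ) ≥ (1/μ)L_μ(x̄, ȳ) + ⟪q, x - x̄⟫` for all `x ∈ χ`, then
`0 ≤ L_μ(x̄, ȳ) - g_μ(ȳ) ≤ max{α, η·d_{χ*_μ}(x̄)}`. -/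
theorem stmt_11 {n m : ℕ} (K : Set (EuclideanSpace ℝ (Fin m)))
    (hKne : K.Nonempty) (hKcl : IsClosed K) (hKcv : Convex ℝ K)
    (hKcone : ∀ (c : ℝ), 0 ≤ c → ∀ x ∈ K, c • x ∈ K)
    (A : EuclideanSpace ℝ (Fin n) →L[ℝ] EuclideanSpace ℝ (Fin m))
    (b : EuclideanSpace ℝ (Fin m))
    (χ : Set (EuclideanSpace ℝ (Fin n)))
    (hχne : χ.Nonempty) (hχcp : IsCompact χ) (hχcv : Convex ℝ χ)
    (p : EuclideanSpace ℝ (Fin n) → ℝ) (hp : ConvexOn ℝ Set.univ p)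
    (μ : ℝ) (hμ : 0 < μ) (ybar : EuclideanSpace ℝ (Fin m))
    (α η : ℝ) (hα : 0 ≤ α) (hη : 0 ≤ η)
    (xbar : EuclideanSpace ℝ (Fin n)) (hxbar : xbar ∈ χ)
    (hcase :
      (Lpen A b K p μ xbar ybar ≤ gmu A b K χ p μ ybar + α) ∨
      (∃ q : EuclideanSpace ℝ (Fin n), ‖q‖ ≤ η / μ ∧ ∀ x ∈ χ,
        (1 / μ) * Lpen A b K p μ xbar ybar + ⟪q, x - xbar⟫
          ≤ (1 / μ) * Lpen A b K p μ x ybar)) :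
    0 ≤ Lpen A b K p μ xbar ybar - gmu A b K χ p μ ybar ∧
    Lpen A b K p μ xbar ybar - gmu A b K χ p μ ybar
      ≤ max α (η * infDist xbar {z ∈ χ | ∀ x ∈ χ, Lpen A b K p μ z ybar ≤ Lpen A b K p μ x ybar}) := by
  have hL : Continuous fun x => Lpen A b K p μ x ybar :=
    continuous_Lpen A b K (continuousOn_univ.mp (hp.continuousOn isOpen_univ)) μ ybar
  exact stmt_11_general
    (argminOn_nonempty_of_isCompact hχcp hχne (hL.lowerSemicontinuous.lowerSemicontinuousOn χ))
    hμ hxbar <| hcase.imp_right fun ⟨q, hq, hsub⟩ =>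
      ⟨innerSL ℝ q, (innerSL_apply_norm ℝ q).trans_le hq, hsub⟩
end

section
/- Let y* be a KKT point of (P). Then for every x ∈ χ, every y ∈ ℝ^m and every μ > 0, p(x) − p* ≥ −‖y*‖₂ · d_K(Ax − b − y/μ) + ⟨y, y*⟩/μ. -/
open RealInnerProductSpace Metric

section InnerProductSpace

variable {F : Type*} [NormedAddCommGroup F] [InnerProductSpace ℝ F] {K : Set F} {z : F}

theorem neg_norm_mul_dist_le_inner {s : F} (hzs : 0 ≤ ⟪z, s⟫) (v : F) :
    -‖z‖ * dist v s ≤ ⟪z, v⟫ :=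
  calc -‖z‖ * dist v s = -(‖z‖ * ‖v - s‖) := by rw [dist_eq_norm, neg_mul]
    _ ≤ ⟪z, v - s⟫ := neg_le_of_abs_le (abs_real_inner_le_norm z (v - s))
    _ = ⟪z, v⟫ - ⟪z, s⟫ := inner_sub_right z v s
    _ ≤ ⟪z, v⟫ := sub_le_self _ hzs

theorem neg_norm_mul_infDist_le_inner (hK : K.Nonempty) (hz : ∀ s ∈ K, 0 ≤ ⟪z, s⟫) (v : F) :
    -‖z‖ * infDist v K ≤ ⟪z, v⟫ := by
  rcases eq_or_ne z 0 with rfl | hz0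
  · simp
  · have norm_z_pos : 0 < ‖z‖ := norm_pos_iff.2 hz0
    have le_infDist_K : -⟪z, v⟫ / ‖z‖ ≤ infDist v K := by
      refine (le_infDist hK).2 fun s hs => ?_
      rw [div_le_iff₀' norm_z_pos]
      linarith [neg_norm_mul_dist_le_inner (hz s hs) v]
    rw [div_le_iff₀' norm_z_pos] at le_infDist_K
    linarith

theorem bddBelow_image_sub_inner_of_convexOn {E : Type*} [NormedAddCommGroup E] [NormedSpace ℝ E]
    [FiniteDimensional ℝ E] {χ : Set E} {p : E → ℝ} {G : E → F} (hχ : IsCompact χ)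
    (hp : ConvexOn ℝ Set.univ p) (hG : ContinuousOn G χ) (z : F) :
    BddBelow ((fun x => p x - ⟪z, G x⟫) '' χ) := by
  have hp_cont : Continuous p := continuousOn_univ.1 (hp.continuousOn isOpen_univ)
  exact hχ.bddBelow_image (by fun_prop)

/-- Here `G x` plays the role of `A x - b` and `v` that of `y / μ`. The gap is measured from the
dual value of an arbitrary dual feasible `z`; at a KKT point this value is `p*`. -/
theorem stmt_12_general {X : Type*} {χ : Set X} {p : X → ℝ} {G : X → F} (hK : K.Nonempty)
    (hz : ∀ s ∈ K, 0 ≤ ⟪z, s⟫) (hbdd : BddBelow ((fun x => p x - ⟪z, G x⟫) '' χ))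
    {x : X} (hx : x ∈ χ) (v : F) :
    -‖z‖ * infDist (G x - v) K + ⟪v, z⟫
      ≤ p x - sInf ((fun x => p x - ⟪z, G x⟫) '' χ) := by
  have dual_value_le : sInf ((fun x => p x - ⟪z, G x⟫) '' χ) ≤ p x - ⟪z, G x⟫ :=
    csInf_le hbdd (Set.mem_image_of_mem _ hx)
  calc -‖z‖ * infDist (G x - v) K + ⟪v, z⟫
      ≤ ⟪z, G x - v⟫ + ⟪v, z⟫ := by
        gcongr
        exact neg_norm_mul_infDist_le_inner hK hz (G x - v)
    _ = ⟪z, G x⟫ := by rw [inner_sub_right, real_inner_comm v z, sub_add_cancel]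
    _ ≤ p x - sInf ((fun x => p x - ⟪z, G x⟫) '' χ) := le_sub_comm.1 dual_value_le

end InnerProductSpace

/-- if `y*` is a KKT point of (P), then for every `x ∈ χ`, `y ∈ ℝ^m` and
`μ > 0`, `p(x) - p* ≥ -‖y*‖·d_K(Ax - b - y/μ) + ⟪y, y*⟫/μ`. -/
theorem stmt_12 {n m : ℕ} (K : Set (EuclideanSpace ℝ (Fin m)))
    (hKne : K.Nonempty) (hKcl : IsClosed K) (hKcv : Convex ℝ K)
    (hKcone : ∀ (c : ℝ), 0 ≤ c → ∀ x ∈ K, c • x ∈ K)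
    (A : EuclideanSpace ℝ (Fin n) →L[ℝ] EuclideanSpace ℝ (Fin m))
    (b : EuclideanSpace ℝ (Fin m))
    (χ : Set (EuclideanSpace ℝ (Fin n)))
    (hχne : χ.Nonempty) (hχcp : IsCompact χ) (hχcv : Convex ℝ χ)
    (p : EuclideanSpace ℝ (Fin n) → ℝ) (hp : ConvexOn ℝ Set.univ p)
    (hfeas : {x ∈ χ | A x - b ∈ K}.Nonempty)
    (ystar : EuclideanSpace ℝ (Fin m)) (hystar : ystar ∈ dualCone K)
    (hKKT : gzero A b χ p ystar = pstar A b K χ p) :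
    ∀ x ∈ χ, ∀ y : EuclideanSpace ℝ (Fin m), ∀ μ : ℝ, 0 < μ →
      -‖ystar‖ * infDist (A x - b - μ⁻¹ • y) K + ⟪y, ystar⟫ / μ
        ≤ p x - pstar A b K χ p := by
  intro x hx y μ _
  rw [← hKKT, div_eq_inv_mul, ← real_inner_smul_left]
  exact stmt_12_general (G := fun x => A x - b) hKne hystar
    (bddBelow_image_sub_inner_of_convexOn hχcp hp (by fun_prop) ystar) hx (μ⁻¹ • y)
end

section
/- Fix x ∈ ℝⁿ, y ∈ ℝ^m and μ > 0, and define the dual update y⁺ = μ·( Π_K(Ax − b − y/μ) − (Ax − b − y/μ) ). Then y⁺ ∈ K* and d_K(Ax − b) ≤ ( ‖y‖₂ + ‖y⁺ − y‖₂ ) / μ. -/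
open RealInnerProductSpace Metric

/-!
Since `K + K ⊆ K`, testing the variational inequality of the projection `p = Π_K(w)` at `p + s` with
`s ∈ K` gives `0 ≤ ⟪p - w, s⟫`, so `μ • (p - w) ∈ K*`. Substituting `w = v - y/μ` with `v = Ax - b`,
the dual step is `y⁺ - y = μ • (p - v)`, and `p ∈ K` gives the sharper bound
`d_K(v) ≤ ‖p - v‖ = ‖y⁺ - y‖ / μ`.
-/

section Cone

variable {𝕜 M : Type*} [Field 𝕜] [LinearOrder 𝕜] [IsStrictOrderedRing 𝕜]
  [AddCommGroup M] [Module 𝕜 M]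

lemma add_mem_of_convex_of_two_smul_mem {K : Set M} (hK : Convex 𝕜 K)
    (htwo : ∀ x ∈ K, (2 : 𝕜) • x ∈ K) {x y : M} (hx : x ∈ K) (hy : y ∈ K) : x + y ∈ K := by
  have hdouble : (2 : 𝕜) • midpoint 𝕜 x y = x + y := by
    rw [two_smul, midpoint_add_self]
  exact hdouble ▸ htwo _ (hK.midpoint_mem hx hy)

lemma exists_convexCone_coe_eq {K : Set M} (hK : Convex 𝕜 K)
    (hsmul : ∀ c : 𝕜, 0 < c → ∀ x ∈ K, c • x ∈ K) : ∃ C : ConvexCone 𝕜 M, (C : Set M) = K :=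
  ⟨{ carrier := K
     smul_mem' := hsmul
     add_mem' := fun _ hx _ hy ↦
       add_mem_of_convex_of_two_smul_mem hK (hsmul 2 two_pos) hx hy }, rfl⟩

end Cone

section Projection

variable {F : Type*} [NormedAddCommGroup F] [InnerProductSpace ℝ F]

lemma inner_sub_nonneg_of_isMinOn_norm_sub {K : Set F} (hK : Convex ℝ K) {w p s : F}
    (hpK : p ∈ K) (hp : IsMinOn (fun z ↦ ‖w - z‖) K p) (hs : p + s ∈ K) :
    0 ≤ ⟪p - w, s⟫ := by
  have hvar : ⟪w - p, p + s - p⟫ ≤ 0 :=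
    (norm_eq_iInf_iff_real_inner_le_zero hK hpK).mp (hp.iInf_eq hpK).symm _ hs
  rwa [add_sub_cancel_left, ← neg_sub p w, inner_neg_left, neg_nonpos] at hvar

lemma sub_mem_dual_innerₗ_of_isMinOn_norm_sub (C : ConvexCone ℝ F) {w p : F}
    (hpC : p ∈ C) (hp : IsMinOn (fun z ↦ ‖w - z‖) C p) :
    p - w ∈ PointedCone.dual (innerₗ F) (C : Set F) := by
  intro s hs
  rw [innerₗ_apply_apply, real_inner_comm]
  exact inner_sub_nonneg_of_isMinOn_norm_sub C.convex hpC hp (C.add_mem hpC hs)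

end Projection

lemma smul_sub_sub_inv_smul_sub_self {𝕜 M : Type*} [DivisionRing 𝕜] [AddCommGroup M] [Module 𝕜 M]
    {μ : 𝕜} (hμ : μ ≠ 0) (p v y : M) : μ • (p - (v - μ⁻¹ • y)) - y = μ • (p - v) := by
  rw [sub_sub_eq_add_sub, add_sub_right_comm, smul_add, smul_inv_smul₀ hμ, add_sub_cancel_right]

lemma infDist_le_norm_smul_sub_div {V : Type*} [SeminormedAddCommGroup V] [NormedSpace ℝ V]
    {K : Set V} {p : V} (hp : p ∈ K) (v : V) {μ : ℝ} (hμ : 0 < μ) :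
    infDist v K ≤ ‖μ • (p - v)‖ / μ := by
  rw [norm_smul_of_nonneg hμ.le, mul_div_cancel_left₀ _ hμ.ne', ← dist_eq_norm']
  exact infDist_le_dist_of_mem hp

lemma dualCone_eq_dual_innerₗ {m : ℕ} (K : Set (EuclideanSpace ℝ (Fin m))) :
    dualCone K = PointedCone.dual (innerₗ (EuclideanSpace ℝ (Fin m))) K := by
  ext y
  simp only [dualCone, Set.mem_ofPred_eq, SetLike.mem_coe, PointedCone.mem_dual,
    innerₗ_apply_apply, real_inner_comm]

theorem stmt_15_general {F : Type*} [NormedAddCommGroup F] [InnerProductSpace ℝ F]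
    (C : ConvexCone ℝ F) {v y w p yplus : F} {μ : ℝ} (hμ : 0 < μ) (hw : w = v - μ⁻¹ • y)
    (hpC : p ∈ C) (hp : IsMinOn (fun z ↦ ‖w - z‖) C p) (hyplus : yplus = μ • (p - w)) :
    yplus ∈ PointedCone.dual (innerₗ F) (C : Set F) ∧ infDist v C ≤ ‖yplus - y‖ / μ := by
  have hstep : yplus - y = μ • (p - v) := by
    rw [hyplus, hw, smul_sub_sub_inv_smul_sub_self hμ.ne']
  constructor
  · rw [hyplus]
    exact PointedCone.smul_mem _ hμ.le (sub_mem_dual_innerₗ_of_isMinOn_norm_sub C hpC hp)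
  · rw [hstep]
    exact infDist_le_norm_smul_sub_div hpC v hμ

/-- fix `x`, `y`, `μ > 0`, set `w = Ax - b - y/μ` and define the dual
update `y⁺ = μ·(Π_K(w) - w)`. Then `y⁺ ∈ K*` and
`d_K(Ax - b) ≤ (‖y‖ + ‖y⁺ - y‖)/μ`. -/
theorem stmt_15 {n m : ℕ} (K : Set (EuclideanSpace ℝ (Fin m)))
    (hKne : K.Nonempty) (hKcl : IsClosed K) (hKcv : Convex ℝ K)
    (hKcone : ∀ (c : ℝ), 0 ≤ c → ∀ x ∈ K, c • x ∈ K)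
    (A : EuclideanSpace ℝ (Fin n) →L[ℝ] EuclideanSpace ℝ (Fin m))
    (b : EuclideanSpace ℝ (Fin m))
    (x : EuclideanSpace ℝ (Fin n)) (y : EuclideanSpace ℝ (Fin m)) (μ : ℝ) (hμ : 0 < μ)
    (w : EuclideanSpace ℝ (Fin m)) (hw : w = A x - b - μ⁻¹ • y)
    -- `Pw` is the Euclidean projection of `w` onto `K`
    (Pw : EuclideanSpace ℝ (Fin m)) (hPwK : Pw ∈ K)
    (hPw : ∀ s ∈ K, ‖w - Pw‖ ≤ ‖w - s‖)
    (yplus : EuclideanSpace ℝ (Fin m)) (hyplus : yplus = μ • (Pw - w)) :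
    yplus ∈ dualCone K ∧
    infDist (A x - b) K ≤ (‖y‖ + ‖yplus - y‖) / μ := by
  obtain ⟨C, rfl⟩ := exists_convexCone_coe_eq hKcv fun c hc ↦ hKcone c hc.le
  obtain ⟨hdual, hdist⟩ := stmt_15_general C hμ hw hPwK hPw hyplus
  exact ⟨dualCone_eq_dual_innerₗ _ ▸ hdual,
    hdist.trans (by gcongr; exact le_add_of_nonneg_left (norm_nonneg y))⟩
end

section
/- Suppose (P) has a KKT point y* (Assumption 1). Let β > 1, μ₀ > 0 and μ_k = β^k·μ₀ for k ≥ 1; let {ξ_k}_{k≥1} ⊂ [0, ∞) satisfy Σ_{k=1}^∞ √(2 ξ_k μ_k) < ∞ and ξ_k ≤ C₀/μ_k for some C₀ ≥ 0 and all k. Let {x_k}_{k≥1} ⊆ χ, y₁ = 0, y_{k+1} = μ_k·( Π_K(Ax_k − b − y_k/μ_k) − (Ax_k − b − y_k/μ_k) ), and suppose L_{μ_k}(x_k, y_k) ≤ g_{μ_k}(y_k) + ξ_k for all k ≥ 1. Then there exists a constant C such that for all k ≥ 1: d_K(Ax_k − b) ≤ C·β^{−k} and |p(x_k) − p*| ≤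 C·β^{−k}. -/
open RealInnerProductSpace Metric

/-!
Let `y'` be the multiplier update of `y`. The projection formula gives two facts about the residual
`u = Ax - b`: its distance to `K` is at most `‖y' - y‖ / μ`, and the penalty term equals
`(‖y'‖² - ‖y‖²) / (2μ)`. Bounding the penalty Lagrangian above by `p* + ξ` (compare with feasible
points) and `p x` below by `p* + ⟪y*, u⟫` (the KKT point) yields the quasi-Fejér inequality
`‖y' - y*‖² ≤ ‖y - y*‖² + 2 ξ μ`. Since `√(2 ξ_k μ_k)` is summable, the multipliers and the numbers
`ξ_k μ_k` are bounded, so the infeasibility and the optimality gap are both `O(1/μ_k)`.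
-/

lemma le_add_tsum_of_succ_le_add {a e : ℕ → ℝ} (he : Summable e) (he₀ : ∀ k, 0 ≤ e k)
    (ha : ∀ k, a (k + 1) ≤ a k + e k) (k : ℕ) : a k ≤ a 0 + ∑' i, e i := by
  have le_partial_sum : ∀ j, a j ≤ a 0 + ∑ i ∈ Finset.range j, e i := by
    intro j
    induction j with
    | zero => simp
    | succ j ih =>
      rw [Finset.sum_range_succ]
      linarith [ha j]
  exact (le_partial_sum k).trans (by gcongr; exact he.sum_le_tsum _ fun i _ => he₀ i)

lemma le_add_sqrt_of_sq_le_sq_add {a c d : ℝ} (hc : 0 ≤ c) (h : a ^ 2 ≤ c ^ 2 + d) :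
    a ≤ c + √d := by
  have hd : d ≤ √d ^ 2 := (Real.sqrt_le_iff.1 le_rfl).2
  have hcross : 0 ≤ c * √d := by positivity
  exact le_of_sq_le_sq (by linarith [add_sq c √d]) (by positivity)

section NearestPoint

variable {F : Type*} [SeminormedAddCommGroup F] {K : Set F} {P : F → F}

/-- `P` sends every point to a nearest point of `K`. In a Euclidean space, with `K` closed and
convex, this is the projection `Π_K`; in general `P` is a choice among the nearest points. -/
structure IsNearestPointMap (K : Set F) (P : F → F) : Prop where
  mem : ∀ w, P w ∈ K
  norm_sub_le : ∀ w, ∀ s ∈ K, ‖w - P w‖ ≤ ‖w - s‖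

lemma IsNearestPointMap.infDist_eq_norm_sub (hP : IsNearestPointMap K P) (w : F) :
    infDist w K = ‖w - P w‖ := by
  refine le_antisymm ?_ ((le_infDist ⟨P w, hP.mem w⟩).2 fun s hs => ?_)
  · simpa only [dist_eq_norm] using infDist_le_dist_of_mem (hP.mem w)
  · simpa only [dist_eq_norm] using hP.norm_sub_le w s hs

end NearestPoint

section Penalty

variable {F : Type*} [SeminormedAddCommGroup F] [NormedSpace ℝ F] {K : Set F} {P : F → F}
  {μ ξ q v : ℝ} {u y : F}

/-- The term that the penalty Lagrangian with parameter `μ` and multiplier `y` adds to the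
objective at a point whose constraint residual `Ax - b` is `u`. -/
noncomputable def conicPenalty (K : Set F) (μ : ℝ) (u y : F) : ℝ :=
  μ / 2 * infDist (u - μ⁻¹ • y) K ^ 2 - ‖y‖ ^ 2 / (2 * μ)

/-- The augmented Lagrangian multiplier update at a point with constraint residual `u`; the map `P`
plays the role of the projection onto the cone. -/
noncomputable def multiplierUpdate (P : F → F) (μ : ℝ) (u y : F) : F :=
  μ • (P (u - μ⁻¹ • y) - (u - μ⁻¹ • y))

lemma conicPenalty_nonpos_of_mem (hμ : 0 < μ) (hu : u ∈ K) (y : F) : conicPenalty K μ u y ≤ 0 := by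
  have infDist_le : infDist (u - μ⁻¹ • y) K ≤ μ⁻¹ * ‖y‖ := by
    simpa [dist_eq_norm, norm_smul, abs_of_pos hμ] using
      infDist_le_dist_of_mem (x := u - μ⁻¹ • y) hu
  have penalty_le : μ / 2 * infDist (u - μ⁻¹ • y) K ^ 2 ≤ μ / 2 * (μ⁻¹ * ‖y‖) ^ 2 := by
    gcongr
    exact infDist_nonneg
  refine sub_nonpos.2 (penalty_le.trans_eq ?_)
  field_simp

lemma neg_norm_sq_div_le_conicPenalty (hμ : 0 ≤ μ) (K : Set F) (u y : F) :
    -(‖y‖ ^ 2 / (2 * μ)) ≤ conicPenalty K μ u y := by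
  rw [conicPenalty, neg_le_sub_iff_le_add]
  exact le_add_of_nonneg_left (by positivity)

lemma conicPenalty_eq_norm_multiplierUpdate (hP : IsNearestPointMap K P) (hμ : 0 < μ) (u y : F) :
    conicPenalty K μ u y = (‖multiplierUpdate P μ u y‖ ^ 2 - ‖y‖ ^ 2) / (2 * μ) := by
  rw [conicPenalty, hP.infDist_eq_norm_sub, multiplierUpdate, norm_smul, norm_sub_rev,
    Real.norm_of_nonneg hμ.le]
  field_simp

lemma multiplierUpdate_sub_self (hμ : μ ≠ 0) (P : F → F) (u y : F) :
    multiplierUpdate P μ u y - y = μ • (P (u - μ⁻¹ • y) - u) := by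
  rw [multiplierUpdate, sub_sub_eq_add_sub, add_sub_right_comm, smul_add, smul_inv_smul₀ hμ,
    add_sub_cancel_right]

lemma infDist_le_norm_multiplierUpdate_sub_div (hP : IsNearestPointMap K P) (hμ : 0 < μ)
    (u y : F) : infDist u K ≤ ‖multiplierUpdate P μ u y - y‖ / μ := by
  refine (infDist_le_dist_of_mem (hP.mem (u - μ⁻¹ • y))).trans_eq ?_
  rw [multiplierUpdate_sub_self hμ.ne', norm_smul, Real.norm_of_nonneg hμ.le,
    mul_div_cancel_left₀ _ hμ.ne', dist_eq_norm, norm_sub_rev]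

lemma sub_le_div_of_add_conicPenalty_le (hμ : 0 < μ) (hupper : q + conicPenalty K μ u y ≤ v + ξ) :
    q - v ≤ (2 * ξ * μ + ‖y‖ ^ 2) / (2 * μ) := by
  have hξ : 2 * ξ * μ / (2 * μ) = ξ := by field_simp
  rw [add_div, hξ]
  linarith [neg_norm_sq_div_le_conicPenalty hμ.le K u y]

end Penalty

section Multiplier

variable {X F : Type*} [SeminormedAddCommGroup F] [InnerProductSpace ℝ F] {K : Set F} {P : F → F}
  {μ ξ q v : ℝ} {u y ystar : F}

lemma neg_inner_le_inner_multiplierUpdate_sub_div (hP : IsNearestPointMap K P) (hμ : 0 < μ)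
    (hystar : ∀ s ∈ K, 0 ≤ ⟪ystar, s⟫) (u y : F) :
    -⟪ystar, u⟫ ≤ ⟪ystar, multiplierUpdate P μ u y - y⟫ / μ := by
  rw [multiplierUpdate_sub_self hμ.ne', inner_smul_right, mul_div_cancel_left₀ _ hμ.ne',
    inner_sub_right]
  linarith [hystar _ (hP.mem (u - μ⁻¹ • y))]

lemma norm_multiplierUpdate_sub_sq_le (hP : IsNearestPointMap K P) (hμ : 0 < μ)
    (hystar : ∀ s ∈ K, 0 ≤ ⟪ystar, s⟫) (hlower : v ≤ q - ⟪ystar, u⟫)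
    (hupper : q + conicPenalty K μ u y ≤ v + ξ) :
    ‖multiplierUpdate P μ u y - ystar‖ ^ 2 ≤ ‖y - ystar‖ ^ 2 + 2 * ξ * μ := by
  have hinner := neg_inner_le_inner_multiplierUpdate_sub_div hP hμ hystar u y
  rw [conicPenalty_eq_norm_multiplierUpdate hP hμ] at hupper
  set y' := multiplierUpdate P μ u y
  have increment_div_le : (‖y'‖ ^ 2 - ‖y‖ ^ 2 - 2 * ⟪ystar, y' - y⟫) / (2 * μ) ≤ ξ := by
    rw [sub_div, mul_div_mul_left _ _ two_ne_zero]
    linarith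
  have increment_le : ‖y'‖ ^ 2 - ‖y‖ ^ 2 - 2 * ⟪ystar, y' - y⟫ ≤ ξ * (2 * μ) :=
    (div_le_iff₀ (by positivity)).1 increment_div_le
  rw [inner_sub_right] at increment_le
  rw [norm_sub_sq_real, norm_sub_sq_real, real_inner_comm, real_inner_comm ystar y]
  linarith

lemma norm_multiplierUpdate_sub_le (hP : IsNearestPointMap K P) (hμ : 0 < μ)
    (hystar : ∀ s ∈ K, 0 ≤ ⟪ystar, s⟫) (hlower : v ≤ q - ⟪ystar, u⟫)
    (hupper : q + conicPenalty K μ u y ≤ v + ξ) :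
    ‖multiplierUpdate P μ u y - ystar‖ ≤ ‖y - ystar‖ + √(2 * ξ * μ) :=
  le_add_sqrt_of_sq_le_sq_add (norm_nonneg _)
    (norm_multiplierUpdate_sub_sq_le hP hμ hystar hlower hupper)

lemma sub_le_div_of_le_sub_inner (hP : IsNearestPointMap K P) (hμ : 0 < μ)
    (hystar : ∀ s ∈ K, 0 ≤ ⟪ystar, s⟫) (hlower : v ≤ q - ⟪ystar, u⟫) (y : F) :
    v - q ≤ ‖ystar‖ * ‖multiplierUpdate P μ u y - y‖ / μ :=
  calc v - q
      ≤ -⟪ystar, u⟫ := by linarith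
    _ ≤ ⟪ystar, multiplierUpdate P μ u y - y⟫ / μ :=
        neg_inner_le_inner_multiplierUpdate_sub_div hP hμ hystar u y
    _ ≤ ‖ystar‖ * ‖multiplierUpdate P μ u y - y‖ / μ := by
        gcongr
        exact real_inner_le_norm _ _

lemma infDist_le_div_and_abs_sub_le_div (hP : IsNearestPointMap K P) (hμ : 0 < μ)
    (hystar : ∀ s ∈ K, 0 ≤ ⟪ystar, s⟫) (hlower : v ≤ q - ⟪ystar, u⟫)
    (hupper : q + conicPenalty K μ u y ≤ v + ξ) {M S : ℝ} (hy : ‖y‖ ≤ M)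
    (hy' : ‖multiplierUpdate P μ u y‖ ≤ M) (hξ : 2 * ξ * μ ≤ S ^ 2) :
    infDist u K ≤ (2 * M * (1 + ‖ystar‖) + (S ^ 2 + M ^ 2) / 2) / μ ∧
      |q - v| ≤ (2 * M * (1 + ‖ystar‖) + (S ^ 2 + M ^ 2) / 2) / μ := by
  have hdist := infDist_le_norm_multiplierUpdate_sub_div hP hμ u y
  have hgap_lower := sub_le_div_of_le_sub_inner hP hμ hystar hlower y
  have hgap_upper := sub_le_div_of_add_conicPenalty_le hμ hupper
  set y' := multiplierUpdate P μ u y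
  have hM : 0 ≤ M := (norm_nonneg y).trans hy
  have hdiff : ‖y' - y‖ ≤ 2 * M := by linarith [norm_sub_le y' y]
  have hdiff_mul : ‖ystar‖ * ‖y' - y‖ ≤ 2 * M * ‖ystar‖ := by
    rw [mul_comm]
    gcongr
  have hy_sq : ‖y‖ ^ 2 ≤ M ^ 2 := by gcongr
  have hMy : 0 ≤ 2 * M * ‖ystar‖ := by positivity
  have hS : 0 ≤ S ^ 2 := sq_nonneg S
  rw [← div_div] at hgap_upper
  refine ⟨hdist.trans ?_, abs_sub_le_iff.2 ⟨hgap_upper.trans ?_, hgap_lower.trans ?_⟩⟩ <;>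
    gcongr <;> linarith [sq_nonneg M]

theorem stmt_17_general (hP : IsNearestPointMap K P) {p : X → ℝ} {c : X → F} {χ : Set X}
    (hv : IsGLB (p '' {z ∈ χ | c z ∈ K}) v) (hystar : ∀ s ∈ K, 0 ≤ ⟪ystar, s⟫)
    (hKKT : ∀ z ∈ χ, v ≤ p z - ⟪ystar, c z⟫) {μ ξ : ℕ → ℝ} (hμ : ∀ k, 0 < μ k)
    (hsum : Summable fun k => √(2 * ξ k * μ k)) {x : ℕ → X} (hx : ∀ k, x k ∈ χ) {y : ℕ → F}
    (hy : ∀ k, y (k + 1) = multiplierUpdate P (μ k) (c (x k)) (y k))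
    (hmin : ∀ k, ∀ z ∈ χ, p (x k) + conicPenalty K (μ k) (c (x k)) (y k)
      ≤ p z + conicPenalty K (μ k) (c z) (y k) + ξ k) :
    ∃ C : ℝ, ∀ k, infDist (c (x k)) K ≤ C / μ k ∧ |p (x k) - v| ≤ C / μ k := by
  have hlower k : v ≤ p (x k) - ⟪ystar, c (x k)⟫ := hKKT _ (hx k)
  have hupper k : p (x k) + conicPenalty K (μ k) (c (x k)) (y k) ≤ v + ξ k := by
    rw [← sub_le_iff_le_add]
    refine hv.2 ?_
    rintro _ ⟨z, ⟨hz, hzK⟩, rfl⟩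
    linarith [hmin k z hz, conicPenalty_nonpos_of_mem (hμ k) hzK (y k)]
  set S := ∑' k, √(2 * ξ k * μ k)
  have hfejer k : ‖y k - ystar‖ ≤ ‖y 0 - ystar‖ + S :=
    le_add_tsum_of_succ_le_add (a := fun k => ‖y k - ystar‖) hsum (fun _ => Real.sqrt_nonneg _)
      (fun k => hy k ▸ norm_multiplierUpdate_sub_le hP (hμ k) hystar (hlower k) (hupper k)) k
  have hbounded k : ‖y k‖ ≤ ‖y 0 - ystar‖ + S + ‖ystar‖ :=
    (norm_le_norm_sub_add _ ystar).trans (by gcongr; exact hfejer k)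
  have hξ k : 2 * ξ k * μ k ≤ S ^ 2 :=
    (Real.sqrt_le_iff.1 (hsum.le_tsum k fun _ _ => Real.sqrt_nonneg _)).2
  exact ⟨_, fun k => infDist_le_div_and_abs_sub_le_div hP (hμ k) hystar (hlower k) (hupper k)
    (hbounded k) (hy k ▸ hbounded (k + 1)) (hξ k)⟩

end Multiplier

section FiniteDimensional

variable {n m : ℕ} {A : EuclideanSpace ℝ (Fin n) →L[ℝ] EuclideanSpace ℝ (Fin m)}
  {b : EuclideanSpace ℝ (Fin m)} {K : Set (EuclideanSpace ℝ (Fin m))}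
  {χ : Set (EuclideanSpace ℝ (Fin n))} {p : EuclideanSpace ℝ (Fin n) → ℝ}

lemma Lpen_eq_add_conicPenalty (μ : ℝ) (x : EuclideanSpace ℝ (Fin n))
    (y : EuclideanSpace ℝ (Fin m)) :
    Lpen A b K p μ x y = p x + conicPenalty K μ (A x - b) y :=
  add_sub_assoc _ _ _

lemma isGLB_pstar (hp : BddBelow (p '' χ)) (hfeas : {x ∈ χ | A x - b ∈ K}.Nonempty) :
    IsGLB (p '' {x ∈ χ | A x - b ∈ K}) (pstar A b K χ p) :=
  isGLB_csInf (hfeas.image p) (hp.mono (Set.image_mono (Set.sep_subset _ _)))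

lemma gzero_le (hχ : IsCompact χ) (hp : ContinuousOn p χ) (z : EuclideanSpace ℝ (Fin m))
    {x : EuclideanSpace ℝ (Fin n)} (hx : x ∈ χ) : gzero A b χ p z ≤ p x - ⟪z, A x - b⟫ :=
  csInf_le (hχ.bddBelow_image (by fun_prop)) ⟨x, hx, rfl⟩

lemma gmu_le_Lpen (hp : BddBelow (p '' χ)) {μ : ℝ} (hμ : 0 ≤ μ) (y : EuclideanSpace ℝ (Fin m))
    {x : EuclideanSpace ℝ (Fin n)} (hx : x ∈ χ) : gmu A b K χ p μ y ≤ Lpen A b K p μ x y := by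
  obtain ⟨B, hB⟩ := hp
  refine csInf_le ⟨B - ‖y‖ ^ 2 / (2 * μ), ?_⟩ ⟨x, hx, rfl⟩
  rintro _ ⟨w, hw, rfl⟩
  simp only [Lpen_eq_add_conicPenalty]
  linarith [hB ⟨w, hw, rfl⟩, neg_norm_sq_div_le_conicPenalty hμ K (A w - b) y]

end FiniteDimensional

/-- geometric convergence rate of ALCC. With a KKT point `y*`,
`μ_k = β^k μ₀` (`β > 1`), `Σ_{k≥1} √(2 ξ_k μ_k) < ∞`, `ξ_k ≤ C₀/μ_k`, dual updates
`y₁ = 0`, `y_{k+1} = μ_k (Π_K(Ax_k - b - y_k/μ_k) - (Ax_k - b - y_k/μ_k))`, and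
`L_{μ_k}(x_k, y_k) ≤ g_{μ_k}(y_k) + ξ_k`, there is a constant `C` with
`d_K(Ax_k - b) ≤ C β^{-k}` and `|p(x_k) - p*| ≤ C β^{-k}` for all `k ≥ 1`. -/
theorem stmt_17 {n m : ℕ} (K : Set (EuclideanSpace ℝ (Fin m)))
    (hKne : K.Nonempty) (hKcl : IsClosed K) (hKcv : Convex ℝ K)
    (hKcone : ∀ (c : ℝ), 0 ≤ c → ∀ x ∈ K, c • x ∈ K)
    (A : EuclideanSpace ℝ (Fin n) →L[ℝ] EuclideanSpace ℝ (Fin m))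
    (b : EuclideanSpace ℝ (Fin m))
    (χ : Set (EuclideanSpace ℝ (Fin n)))
    (hχne : χ.Nonempty) (hχcp : IsCompact χ) (hχcv : Convex ℝ χ)
    (p : EuclideanSpace ℝ (Fin n) → ℝ) (hp : ConvexOn ℝ Set.univ p)
    (hfeas : {x ∈ χ | A x - b ∈ K}.Nonempty)
    (ystar : EuclideanSpace ℝ (Fin m)) (hystar : ystar ∈ dualCone K)
    (hKKT : gzero A b χ p ystar = pstar A b K χ p)
    -- `PK` is the Euclidean projection onto `K`
    (PK : EuclideanSpace ℝ (Fin m) → EuclideanSpace ℝ (Fin m))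
    (hPKmem : ∀ v, PK v ∈ K)
    (hPK : ∀ v, ∀ s ∈ K, ‖v - PK v‖ ≤ ‖v - s‖)
    (β μ₀ : ℝ) (hβ : 1 < β) (hμ₀ : 0 < μ₀)
    (μ : ℕ → ℝ) (hμ : ∀ k, 1 ≤ k → μ k = β ^ k * μ₀)
    (ξ : ℕ → ℝ) (hξ : ∀ k, 1 ≤ k → 0 ≤ ξ k)
    (hsum : Summable (fun k : ℕ => Real.sqrt (2 * ξ (k + 1) * μ (k + 1))))
    (C₀ : ℝ) (hC₀ : 0 ≤ C₀) (hξμ : ∀ k, 1 ≤ k → ξ k ≤ C₀ / μ k)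
    (x : ℕ → EuclideanSpace ℝ (Fin n)) (hx : ∀ k, 1 ≤ k → x k ∈ χ)
    (y : ℕ → EuclideanSpace ℝ (Fin m)) (hy1 : y 1 = 0)
    (hyrec : ∀ k, 1 ≤ k → y (k + 1)
      = μ k • (PK (A (x k) - b - (μ k)⁻¹ • y k) - (A (x k) - b - (μ k)⁻¹ • y k)))
    (hL : ∀ k, 1 ≤ k →
      Lpen A b K p (μ k) (x k) (y k) ≤ gmu A b K χ p (μ k) (y k) + ξ k) :
    ∃ C : ℝ, ∀ k, 1 ≤ k →
      infDist (A (x k) - b) K ≤ C / β ^ k ∧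
      |p (x k) - pstar A b K χ p| ≤ C / β ^ k := by
  have hpc : ContinuousOn p χ := (hp.continuousOn isOpen_univ).mono χ.subset_univ
  have hpb : BddBelow (p '' χ) := hχcp.bddBelow_image hpc
  have hμpos k : 0 < μ (k + 1) := by rw [hμ (k + 1) k.succ_pos]; positivity
  have hmin k z (hz : z ∈ χ) :
      p (x (k + 1)) + conicPenalty K (μ (k + 1)) (A (x (k + 1)) - b) (y (k + 1))
        ≤ p z + conicPenalty K (μ (k + 1)) (A z - b) (y (k + 1)) + ξ (k + 1) := by
    simp only [← Lpen_eq_add_conicPenalty]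
    exact (hL _ k.succ_pos).trans (by gcongr; exact gmu_le_Lpen hpb (hμpos k).le _ hz)
  obtain ⟨C, hC⟩ := stmt_17_general ⟨hPKmem, hPK⟩ (isGLB_pstar hpb hfeas) hystar
    (fun z hz => hKKT ▸ gzero_le hχcp hpc ystar hz) hμpos hsum (fun k => hx _ k.succ_pos)
    (y := fun k => y (k + 1)) (fun k => hyrec _ k.succ_pos) hmin
  refine ⟨C / μ₀, fun | k + 1, hk => ?_⟩
  rw [div_div, mul_comm, ← hμ _ hk]
  exact hC k
end
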